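/- Let λ1 ≥ λ2 ≥ λ3 > 0 with λ1 + λ2 + λ3 = 1 (so λ4 = 0), and suppose 2λ1 − λ2 > 1 and λ2 > λ3. Then there exists no non-entangling (NE) map Λ satisfying Λ(ρ_λ) = σ_λ, where ρ_λ = λ1 Φ1 + λ2 |01⟩⟨01| + λ3 Φ2 and σ_λ = λ1 Φ1 + λ2 Φ2 + λ3 Φ3. -/

import Mathlib

open Matrix Kronecker Polynomial
open scoped ComplexOrder

noncomputable section

/-- Index set for two qubits: ℂ²⊗ℂ² ≅ ℂ⁴ with basis |00⟩,|01⟩,|10⟩,|11⟩. -/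
abbrev Q2 : Type := Fin 2 × Fin 2
abbrev Mat2 : Type := Matrix (Fin 2) (Fin 2) ℂ
abbrev Mat4 : Type := Matrix Q2 Q2 ℂ
abbrev Vec4 : Type := Q2 → ℂ

/-- Computational basis vector |ij⟩. -/
def ket (i j : Fin 2) : Vec4 := fun p => if p = (i, j) then 1 else 0

/-- The rank-one matrix |ψ⟩⟨φ|. -/
def ketBra (ψ φ : Vec4) : Mat4 := fun p q => ψ p * star (φ q)

/-- The four Bell vectors |Φ1⟩,…,|Φ4⟩. -/
def bell : Fin 4 → Vec4 :=
  ![(Real.sqrt 2 : ℂ)⁻¹ • (ket 0 0 + ket 1 1),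
    (Real.sqrt 2 : ℂ)⁻¹ • (ket 0 0 - ket 1 1),
    (Real.sqrt 2 : ℂ)⁻¹ • (ket 1 0 + ket 0 1),
    (Real.sqrt 2 : ℂ)⁻¹ • (ket 1 0 - ket 0 1)]

/-- Bell projectors Φ_i = |Φ_i⟩⟨Φ_i|. -/
def bellProj (i : Fin 4) : Mat4 := ketBra (bell i) (bell i)

/-- A two-qubit density matrix: Hermitian positive semidefinite with trace one. -/
def IsDensity (ρ : Mat4) : Prop := ρ.PosSemidef ∧ ρ.trace = 1

/-- Unit vector in ℂ². -/
def IsUnitVec (u : Fin 2 → ℂ) : Prop := ∑ x, Complex.normSq (u x) = 1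

/-- Separable two-qubit density matrix: convex mixture of products of pure states. -/
def SepState (ρ : Mat4) : Prop :=
  ∃ (n : ℕ) (p : Fin n → ℝ) (u v : Fin n → Fin 2 → ℂ),
    (∀ i, 0 ≤ p i) ∧ (∑ i, p i = 1) ∧
    (∀ i, IsUnitVec (u i)) ∧ (∀ i, IsUnitVec (v i)) ∧
    ρ = ∑ i, (p i : ℂ) • (vecMulVec (u i) (star (u i)) ⊗ₖ vecMulVec (v i) (star (v i)))

/-- A SEP map: Kraus operators in product form, trace preserving. -/
def IsSEP (T : Mat4 → Mat4) : Prop :=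
  ∃ (k : ℕ) (A B : Fin k → Mat2),
    (∑ i, (A i ⊗ₖ B i)ᴴ * (A i ⊗ₖ B i) = 1) ∧
    ∀ X, T X = ∑ i, (A i ⊗ₖ B i) * X * (A i ⊗ₖ B i)ᴴ

/-- CPTP map in Kraus form. -/
def IsCPTP (T : Mat4 → Mat4) : Prop :=
  ∃ (k : ℕ) (K : Fin k → Mat4),
    (∑ i, (K i)ᴴ * K i = 1) ∧ ∀ X, T X = ∑ i, K i * X * (K i)ᴴ

/-- Non-entangling (NE) map: CPTP and maps separable states to separable states. -/
def IsNE (T : Mat4 → Mat4) : Prop :=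
  IsCPTP T ∧ ∀ ρ, SepState ρ → SepState (T ρ)

/-- The MEMS state ρ_λ = λ1 Φ1 + λ2 |01⟩⟨01| + λ3 Φ2 + λ4 |10⟩⟨10|. -/
def mems (l1 l2 l3 l4 : ℝ) : Mat4 :=
  (l1 : ℂ) • bellProj 0 + (l2 : ℂ) • ketBra (ket 0 1) (ket 0 1) +
  (l3 : ℂ) • bellProj 1 + (l4 : ℂ) • ketBra (ket 1 0) (ket 1 0)

/-- The Bell-diagonal state σ_λ = λ1 Φ1 + λ2 Φ2 + λ3 Φ3 + λ4 Φ4. -/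
def bdiag (l1 l2 l3 l4 : ℝ) : Mat4 :=
  (l1 : ℂ) • bellProj 0 + (l2 : ℂ) • bellProj 1 + (l3 : ℂ) • bellProj 2 + (l4 : ℂ) • bellProj 3

/-- The normalized vector |Φ1(ε)⟩ = (|Φ1⟩ + ε|10⟩)/√(1+ε²). -/
def phi1eps (ε : ℝ) : Vec4 :=
  (Real.sqrt (1 + ε ^ 2) : ℂ)⁻¹ • (bell 0 + (ε : ℂ) • ket 1 0)


/-- Expectation value of `X` in the (unnormalised) vector `w`. -/
def qf (w : Vec4) (X : Mat4) : ℂ := star w ⬝ᵥ (X *ᵥ w)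

/-- Expectation in `w` of the image of `|v⟩⟨v|` under the Kraus family `K`. -/
def gf {k : ℕ} (K : Fin k → Mat4) (w v : Vec4) : ℝ :=
  ∑ i, Complex.normSq (star w ⬝ᵥ (K i *ᵥ v))

/-- Product vector. -/
def pv (u v : Fin 2 → ℂ) : Vec4 := fun p => u p.1 * v p.2

lemma qf_add (w : Vec4) (X Y : Mat4) : qf w (X + Y) = qf w X + qf w Y := by
  simp [qf, add_mulVec, dotProduct_add]

lemma qf_smul (w : Vec4) (c : ℂ) (X : Mat4) : qf w (c • X) = c * qf w X := by
  simp [qf, smul_mulVec, dotProduct_smul]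

lemma qf_sum {ι : Type*} (s : Finset ι) (w : Vec4) (X : ι → Mat4) :
    qf w (∑ i ∈ s, X i) = ∑ i ∈ s, qf w (X i) := by
  simp [qf, sum_mulVec, dotProduct_sum]

lemma ketBra_eq (ψ φ : Vec4) : ketBra ψ φ = vecMulVec ψ (star φ) := by
  ext p q; simp [ketBra, vecMulVec_apply]

lemma qf_ketBra (w v : Vec4) : qf w (ketBra v v) = (Complex.normSq (star w ⬝ᵥ v) : ℂ) := by
  rw [ketBra_eq, qf, vecMulVec_mulVec, Complex.normSq_eq_conj_mul_self]
  simp only [dotProduct_smul, op_smul_eq_smul, smul_eq_mul]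
  congr 1
  rw [← starRingEnd_apply] 
  simp [dotProduct, map_sum, mul_comm]

lemma kraus_ketBra (K : Mat4) (v : Vec4) :
    K * ketBra v v * Kᴴ = ketBra (K *ᵥ v) (K *ᵥ v) := by
  rw [ketBra_eq, ketBra_eq, mul_vecMulVec, vecMulVec_mul, star_mulVec]

lemma qf_kraus {k : ℕ} (K : Fin k → Mat4) (w v : Vec4) :
    qf w (∑ i, K i * ketBra v v * (K i)ᴴ) = (gf K w v : ℂ) := by
  simp only [qf_sum, kraus_ketBra, qf_ketBra, gf]
  push_cast; rfl

lemma gf_nonneg {k : ℕ} (K : Fin k → Mat4) (w v : Vec4) : 0 ≤ gf K w v :=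
  Finset.sum_nonneg fun _ _ => Complex.normSq_nonneg _

lemma gf_smul {k : ℕ} (K : Fin k → Mat4) (w v : Vec4) (c : ℂ) :
    gf K w (c • v) = Complex.normSq c * gf K w v := by
  simp [gf, mulVec_smul, dotProduct_smul, Finset.mul_sum]

lemma gf_par {k : ℕ} (K : Fin k → Mat4) (w x y : Vec4) :
    gf K w (x + y) + gf K w (x - y) = 2 * gf K w x + 2 * gf K w y := by
  simp only [gf, mulVec_add, mulVec_sub, dotProduct_add, dotProduct_sub, Finset.mul_sum,
    ← Finset.sum_add_distrib]
  refine Finset.sum_congr rfl fun i _ => ?_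
  simp only [Complex.normSq_apply, Complex.add_re, Complex.add_im, Complex.sub_re, Complex.sub_im]
  ring

lemma gf_four {k : ℕ} (K : Fin k → Mat4) (w x y z : Vec4) :
    gf K w (x + y + z) + gf K w (x - y - z) + gf K w (x + Complex.I • y - Complex.I • z)
      + gf K w (x - Complex.I • y + Complex.I • z)
      = 4 * (gf K w x + gf K w y + gf K w z) := by
  simp only [gf, mulVec_add, mulVec_sub, dotProduct_add, dotProduct_sub, Finset.mul_sum,
    ← Finset.sum_add_distrib, mulVec_smul, dotProduct_smul]
  refine Finset.sum_congr rfl fun i _ => ?_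
  simp [Complex.normSq_apply, Complex.add_re, Complex.add_im, Complex.sub_re, Complex.sub_im]
  ring

lemma sep_term (u v : Fin 2 → ℂ) :
    (vecMulVec u (star u) ⊗ₖ vecMulVec v (star v)) = ketBra (pv u v) (pv u v) := by
  ext p q
  simp [ketBra, pv, vecMulVec_apply, kroneckerMap_apply]
  ring

lemma sep_pv (u v : Fin 2 → ℂ) (hu : IsUnitVec u) (hv : IsUnitVec v) :
    SepState (ketBra (pv u v) (pv u v)) := by
  refine ⟨1, fun _ => 1, fun _ => u, fun _ => v, by simp, by simp, fun _ => hu, fun _ => hv, ?_⟩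
  simp [sep_term]

lemma sc : (Complex.normSq ((Real.sqrt 2 : ℂ)⁻¹)) = 1 / 2 := by
  rw [map_inv₀, Complex.normSq_ofReal, Real.mul_self_sqrt (by norm_num)]; norm_num

lemma dot_bell0 (x : Vec4) : Complex.normSq (star (bell 0) ⬝ᵥ x)
    = Complex.normSq (x (0,0) + x (1,1)) / 2 := by
  have : star (bell 0) ⬝ᵥ x = (Real.sqrt 2 : ℂ)⁻¹ * (x (0,0) + x (1,1)) := by
    simp [bell, ket, dotProduct, Fintype.sum_prod_type, Complex.conj_ofReal]; try ring
  rw [this, map_mul, sc]; ring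

lemma dot_bell1 (x : Vec4) : Complex.normSq (star (bell 1) ⬝ᵥ x)
    = Complex.normSq (x (0,0) - x (1,1)) / 2 := by
  have : star (bell 1) ⬝ᵥ x = (Real.sqrt 2 : ℂ)⁻¹ * (x (0,0) - x (1,1)) := by
    simp [bell, ket, dotProduct, Fintype.sum_prod_type, Complex.conj_ofReal]; try ring
  rw [this, map_mul, sc]; ring

lemma dot_bell2 (x : Vec4) : Complex.normSq (star (bell 2) ⬝ᵥ x)
    = Complex.normSq (x (1,0) + x (0,1)) / 2 := by
  have : star (bell 2) ⬝ᵥ x = (Real.sqrt 2 : ℂ)⁻¹ * (x (1,0) + x (0,1)) := by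
    simp [bell, ket, dotProduct, Fintype.sum_prod_type, Complex.conj_ofReal]; try ring
  rw [this, map_mul, sc]; ring

lemma dot_bell3 (x : Vec4) : Complex.normSq (star (bell 3) ⬝ᵥ x)
    = Complex.normSq (x (1,0) - x (0,1)) / 2 := by
  have : star (bell 3) ⬝ᵥ x = (Real.sqrt 2 : ℂ)⁻¹ * (x (1,0) - x (0,1)) := by
    simp [bell, ket, dotProduct, Fintype.sum_prod_type, Complex.conj_ofReal]; try ring
  rw [this, map_mul, sc]; ring

/-- Two-vector Parseval bound plus trace preservation. -/
lemma gf_trace {k : ℕ} (K : Fin k → Mat4) (hK : ∑ i, (K i)ᴴ * K i = 1) (v : Vec4) :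
    gf K (bell 0) v + gf K (bell 1) v + gf K (bell 2) v + gf K (bell 3) v
      = ∑ p, Complex.normSq (v p) := by
  have h1 : ∀ x : Vec4, Complex.normSq (star (bell 0) ⬝ᵥ x) + Complex.normSq (star (bell 1) ⬝ᵥ x)
      + Complex.normSq (star (bell 2) ⬝ᵥ x) + Complex.normSq (star (bell 3) ⬝ᵥ x)
      = ∑ p, Complex.normSq (x p) := by
    intro x
    rw [dot_bell0, dot_bell1, dot_bell2, dot_bell3]
    simp [Fintype.sum_prod_type, Complex.normSq_apply]
    ring
  have h2 : ∀ x : Vec4, ((∑ p, Complex.normSq (x p) : ℝ) : ℂ) = star x ⬝ᵥ x := by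
    intro x
    simp [dotProduct, Complex.normSq_eq_conj_mul_self]
  simp only [gf, ← Finset.sum_add_distrib, h1]
  apply Complex.ofReal_injective
  rw [h2, Complex.ofReal_sum]
  simp only [h2, star_mulVec]
  have : ∀ i, (star v ᵥ* (K i)ᴴ) ⬝ᵥ (K i *ᵥ v) = star v ⬝ᵥ (((K i)ᴴ * K i) *ᵥ v) := by
    intro i
    rw [← mulVec_mulVec, dotProduct_mulVec (star v)]
  simp only [this, ← dotProduct_sum, ← sum_mulVec, hK, one_mulVec]

lemma unit_iff (u : Fin 2 → ℂ) : IsUnitVec u ↔ Complex.normSq (u 0) + Complex.normSq (u 1) = 1 := by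
  simp [IsUnitVec, Fin.sum_univ_two]

lemma cs_aux (a b c d : ℂ) (h1 : Complex.normSq a + Complex.normSq b = 1)
    (h2 : Complex.normSq c + Complex.normSq d = 1) :
    Complex.normSq (a * c + b * d) ≤ 1 := by
  have : Complex.normSq (a * c + b * d) + Complex.normSq (a * star d - b * star c)
      = (Complex.normSq a + Complex.normSq b) * (Complex.normSq c + Complex.normSq d) := by
    simp [Complex.normSq_apply]; ring
  rw [h1, h2] at this
  linarith [Complex.normSq_nonneg (a * star d - b * star c)]

lemma pv_bound0 (u v : Fin 2 → ℂ) (hu : IsUnitVec u) (hv : IsUnitVec v) :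
    Complex.normSq (star (bell 0) ⬝ᵥ pv u v) ≤ 1 / 2 := by
  rw [unit_iff] at hu hv
  rw [dot_bell0]
  have := cs_aux _ _ _ _ hu hv
  simp only [pv]; linarith

lemma pv_bound1 (u v : Fin 2 → ℂ) (hu : IsUnitVec u) (hv : IsUnitVec v) :
    Complex.normSq (star (bell 1) ⬝ᵥ pv u v) ≤ 1 / 2 := by
  rw [unit_iff] at hu hv
  rw [dot_bell1]
  have := cs_aux (u 0) (-u 1) _ _ (by simpa using hu) hv
  simp only [pv]
  rw [neg_mul, ← sub_eq_add_neg] at this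
  linarith

lemma sep_qf {τ : Mat4} (h : SepState τ) : ∃ (n : ℕ) (p : Fin n → ℝ) (u v : Fin n → Fin 2 → ℂ),
    (∀ i, 0 ≤ p i) ∧ (∑ i, p i = 1) ∧ (∀ i, IsUnitVec (u i)) ∧ (∀ i, IsUnitVec (v i)) ∧
    ∀ w, qf w τ = ((∑ i, p i * Complex.normSq (star w ⬝ᵥ pv (u i) (v i)) : ℝ) : ℂ) := by
  obtain ⟨n, p, u, v, hp, hs, hu, hv, rfl⟩ := h
  refine ⟨n, p, u, v, hp, hs, hu, hv, fun w => ?_⟩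
  simp only [sep_term, qf_sum, qf_smul, qf_ketBra]
  push_cast; rfl

lemma sep_bound {τ : Mat4} (h : SepState τ) (w : Vec4) (g : ℝ) (hg : qf w τ = g)
    (hw : ∀ u v, IsUnitVec u → IsUnitVec v → Complex.normSq (star w ⬝ᵥ pv u v) ≤ 1 / 2) :
    g ≤ 1 / 2 := by
  obtain ⟨n, p, u, v, hp, hs, hu, hv, hq⟩ := sep_qf h
  rw [hq w] at hg
  have := Complex.ofReal_injective hg
  rw [← this]
  calc _ ≤ ∑ i, p i * (1 / 2) :=
        Finset.sum_le_sum fun i _ => mul_le_mul_of_nonneg_left (hw _ _ (hu i) (hv i)) (hp i)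
    _ = 1 / 2 := by rw [← Finset.sum_mul, hs, one_mul]

lemma half_aux (a b c d : ℂ) (h1 : Complex.normSq a + Complex.normSq b = 1)
    (h2 : Complex.normSq c + Complex.normSq d = 1)
    (h3 : a * c + b * d = 0) (h4 : b * c - a * d = 0) :
    Complex.normSq (a * c - b * d) = 1 := by
  have e3 : a * c = -(b * d) := by linear_combination h3
  have e4 : b * c = a * d := by linear_combination h4
  have n3 : Complex.normSq a * Complex.normSq c = Complex.normSq b * Complex.normSq d := by
    rw [← map_mul, ← map_mul, e3, Complex.normSq_neg]
  have n4 : Complex.normSq b * Complex.normSq c = Complex.normSq a * Complex.normSq d := by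
    rw [← map_mul, ← map_mul, e4]
  have : a * c - b * d = 2 * (a * c) := by linear_combination -h3
  rw [this, map_mul, map_mul]
  have h2' : Complex.normSq (2 : ℂ) = 4 := by norm_num [Complex.normSq_apply]
  rw [h2']
  generalize Complex.normSq a = A at *
  generalize Complex.normSq b = B at *
  generalize Complex.normSq c = C at *
  generalize Complex.normSq d = D at *
  obtain rfl : B = 1 - A := by linarith
  obtain rfl : D = 1 - C := by linarith
  have hA : A = 1 - C := by linarith
  subst hA
  have hC : C = 1 / 2 := by nlinarith
  subst hC
  norm_num

lemma sep_half {τ : Mat4} (h : SepState τ) (g : ℝ) (hg : qf (bell 1) τ = g)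
    (h0 : qf (bell 0) τ = 0) (h3 : qf (bell 3) τ = 0) : g = 1 / 2 := by
  obtain ⟨n, p, u, v, hp, hs, hu, hv, hq⟩ := sep_qf h
  rw [hq] at hg h0 h3
  have hg := Complex.ofReal_injective hg
  have h0 := Complex.ofReal_eq_zero.mp h0
  have h3 := Complex.ofReal_eq_zero.mp h3
  rw [Finset.sum_eq_zero_iff_of_nonneg
    (fun i _ => mul_nonneg (hp i) (Complex.normSq_nonneg _))] at h0 h3
  rw [← hg]
  have : ∀ i ∈ Finset.univ, p i * Complex.normSq (star (bell 1) ⬝ᵥ pv (u i) (v i))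
      = p i * (1 / 2) := by
    intro i hi
    rcases mul_eq_zero.mp (h0 i hi) with hz | h0
    · simp [hz]
    rcases mul_eq_zero.mp (h3 i hi) with hz | h3
    · simp [hz]
    rw [dot_bell0] at h0
    rw [dot_bell3] at h3
    have h0' := Complex.normSq_eq_zero.mp (by linarith : Complex.normSq
      (pv (u i) (v i) (0, 0) + pv (u i) (v i) (1, 1)) = 0)
    have h3' := Complex.normSq_eq_zero.mp (by linarith : Complex.normSq
      (pv (u i) (v i) (1, 0) - pv (u i) (v i) (0, 1)) = 0)
    rw [dot_bell1]
    simp only [pv] at h0' h3' ⊢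
    rw [half_aux _ _ _ _ ((unit_iff _).mp (hu i)) ((unit_iff _).mp (hv i)) h0' h3']
  rw [Finset.sum_congr rfl this, ← Finset.sum_mul, hs, one_mul]

lemma prod_bound {k : ℕ} (K : Fin k → Mat4)
    (hNE : ∀ ρ, SepState ρ → SepState (∑ i, K i * ρ * (K i)ᴴ)) (w : Vec4)
    (hw : ∀ u v, IsUnitVec u → IsUnitVec v → Complex.normSq (star w ⬝ᵥ pv u v) ≤ 1 / 2)
    (a b : ℂ) : gf K w (pv ![1, a] ![1, b])
      ≤ (1 + Complex.normSq a) * (1 + Complex.normSq b) / 2 := by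
  have key : ∀ a : ℂ, ∃ c : ℂ, Complex.normSq c = (1 + Complex.normSq a)⁻¹ ∧
      IsUnitVec (c • ![1, a]) := by
    intro a
    have ha : 0 < 1 + Complex.normSq a := by linarith [Complex.normSq_nonneg a]
    have hc : Complex.normSq ((Real.sqrt (1 + Complex.normSq a)⁻¹ : ℝ) : ℂ)
        = (1 + Complex.normSq a)⁻¹ := by
      rw [Complex.normSq_ofReal, Real.mul_self_sqrt (by positivity)]
    refine ⟨_, hc, ?_⟩
    rw [unit_iff]
    simp only [Pi.smul_apply, smul_eq_mul, map_mul, hc]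
    simp
    field_simp
  obtain ⟨c, hc, hcu⟩ := key a
  obtain ⟨d, hd, hdu⟩ := key b
  have hs := hNE _ (sep_pv _ _ hcu hdu)
  have hb := sep_bound hs w _ (qf_kraus K w _) hw
  have e : pv (c • ![1, a]) (d • ![1, b]) = (c * d) • pv ![1, a] ![1, b] := by
    ext p; simp only [pv, Pi.smul_apply, smul_eq_mul]; ring
  rw [e, gf_smul, map_mul, hc, hd] at hb
  have ha : 0 < 1 + Complex.normSq a := by linarith [Complex.normSq_nonneg a]
  have hb' : 0 < 1 + Complex.normSq b := by linarith [Complex.normSq_nonneg b]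
  rw [← mul_inv, inv_mul_le_iff₀ (by positivity)] at hb
  linarith

lemma avg_bound {k : ℕ} (K : Fin k → Mat4)
    (hNE : ∀ ρ, SepState ρ → SepState (∑ i, K i * ρ * (K i)ᴴ)) (w : Vec4)
    (hw : ∀ u v, IsUnitVec u → IsUnitVec v → Complex.normSq (star w ⬝ᵥ pv u v) ≤ 1 / 2)
    (A B κ : ℝ) (hκ : κ * κ = 1) (hAB : A * B = 1) :
    gf K w (ket 0 0 + (κ : ℂ) • ket 1 1) + B ^ 2 * gf K w (ket 0 1) + A ^ 2 * gf K w (ket 1 0)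
      ≤ 1 + (A ^ 2 + B ^ 2) / 2 := by
  have hABc : (A : ℂ) * B = 1 := by exact_mod_cast hAB
  have hI := Complex.I_mul_I
  have h4 := gf_four K w (ket 0 0 + (κ : ℂ) • ket 1 1) ((B : ℂ) • ket 0 1) ((κ * A : ℂ) • ket 1 0)
  have e1 : ket 0 0 + (κ : ℂ) • ket 1 1 + (B : ℂ) • ket 0 1 + (κ * A : ℂ) • ket 1 0
      = pv ![1, κ * A] ![1, B] := by
    ext ⟨p, q⟩
    fin_cases p <;> fin_cases q <;> simp [ket, pv] <;> linear_combination (-(κ : ℂ)) * hABc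
  have e2 : ket 0 0 + (κ : ℂ) • ket 1 1 - (B : ℂ) • ket 0 1 - (κ * A : ℂ) • ket 1 0
      = pv ![1, -(κ * A)] ![1, -B] := by
    ext ⟨p, q⟩
    fin_cases p <;> fin_cases q <;> simp [ket, pv] <;> linear_combination (-(κ : ℂ)) * hABc
  have e3 : ket 0 0 + (κ : ℂ) • ket 1 1 + Complex.I • (B : ℂ) • ket 0 1
      - Complex.I • (κ * A : ℂ) • ket 1 0 = pv ![1, -(Complex.I * (κ * A))] ![1, Complex.I * B] := by
    ext ⟨p, q⟩
    fin_cases p <;> fin_cases q <;> simp [ket, pv] <;>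
      linear_combination (-(κ : ℂ)) * hABc + (κ * A * B : ℂ) * hI
  have e4 : ket 0 0 + (κ : ℂ) • ket 1 1 - Complex.I • (B : ℂ) • ket 0 1
      + Complex.I • (κ * A : ℂ) • ket 1 0 = pv ![1, Complex.I * (κ * A)] ![1, -(Complex.I * B)] := by
    ext ⟨p, q⟩
    fin_cases p <;> fin_cases q <;> simp [ket, pv] <;>
      linear_combination (-(κ : ℂ)) * hABc + (κ * A * B : ℂ) * hI
  rw [e1, e2, e3, e4, gf_smul, gf_smul] at h4
  have b1 := prod_bound K hNE w hw (κ * A) B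
  have b2 := prod_bound K hNE w hw (-(κ * A)) (-B)
  have b3 := prod_bound K hNE w hw (-(Complex.I * (κ * A))) (Complex.I * B)
  have b4 := prod_bound K hNE w hw (Complex.I * (κ * A)) (-(Complex.I * B))
  simp only [Complex.normSq_neg, map_mul, Complex.normSq_I, Complex.normSq_ofReal, hκ, one_mul]
    at b1 b2 b3 b4 h4
  have hABs : (1 + A * A) * (1 + B * B) / 2 = 1 + (A ^ 2 + B ^ 2) / 2 := by
    linear_combination (A * B + 1) / 2 * hAB
  rw [hABs] at b1 b2 b3 b4
  linarith

lemma qf_bdiag (l1 l2 l3 : ℝ) : qf (bell 0) (bdiag l1 l2 l3 0) = l1 ∧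
    qf (bell 1) (bdiag l1 l2 l3 0) = l2 ∧ qf (bell 3) (bdiag l1 l2 l3 0) = 0 := by
  have hs : (Complex.normSq ((Real.sqrt 2 : ℂ)⁻¹ + (Real.sqrt 2 : ℂ)⁻¹)) = 2 := by
    rw [← two_mul, map_mul, sc]; norm_num [Complex.normSq_apply]
  refine ⟨?_, ?_, ?_⟩ <;>
  · simp only [bdiag, bellProj, qf_add, qf_smul, qf_ketBra, dot_bell0, dot_bell1, dot_bell3]
    simp [bell, ket, hs]

theorem no_NE_rank3 (l1 l2 l3 : ℝ) (h12 : l2 ≤ l1) (h23 : l3 ≤ l2) (h3 : 0 < l3)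
    (hsum : l1 + l2 + l3 = 1) (ha : 2 * l1 - l2 > 1) (hb : l2 > l3) :
    ¬ ∃ T : Mat4 → Mat4, IsNE T ∧ T (mems l1 l2 l3 0) = bdiag l1 l2 l3 0 := by

  rintro ⟨T, ⟨⟨k, K, hK, hT⟩, hNE⟩, hmap⟩
  obtain rfl : T = fun X => ∑ i, K i * X * (K i)ᴴ := funext hT
  simp only at hNE hmap
  have hlin : ∀ w, (((l1 * gf K w (bell 0) + l2 * gf K w (ket 0 1) + l3 * gf K w (bell 1) : ℝ)) : ℂ)
      = qf w (bdiag l1 l2 l3 0) := by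
    intro w
    rw [← hmap]
    have : ∑ i, K i * mems l1 l2 l3 0 * (K i)ᴴ
        = (l1 : ℂ) • ∑ i, K i * ketBra (bell 0) (bell 0) * (K i)ᴴ
        + (l2 : ℂ) • ∑ i, K i * ketBra (ket 0 1) (ket 0 1) * (K i)ᴴ
        + (l3 : ℂ) • ∑ i, K i * ketBra (bell 1) (bell 1) * (K i)ᴴ := by
      simp [mems, bellProj, Finset.smul_sum, mul_add, add_mul, Finset.sum_add_distrib]
    rw [this]
    simp only [qf_add, qf_smul, qf_kraus]
    push_cast; rfl
  obtain ⟨q0, q1, q3⟩ := qf_bdiag l1 l2 l3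
  have E0 := Complex.ofReal_injective ((hlin _).trans q0)
  have E1 := Complex.ofReal_injective ((hlin _).trans q1)
  have E3 := Complex.ofReal_eq_zero.mp ((hlin _).trans q3)
  have hb0 : ∀ w, gf K w (bell 0) = gf K w (ket 0 0 + ket 1 1) / 2 := by
    intro w
    have : bell 0 = (Real.sqrt 2 : ℂ)⁻¹ • (ket 0 0 + ket 1 1) := rfl
    rw [this, gf_smul, sc]; ring
  have hb1 : ∀ w, gf K w (bell 1) = gf K w (ket 0 0 - ket 1 1) / 2 := by
    intro w
    have : bell 1 = (Real.sqrt 2 : ℂ)⁻¹ • (ket 0 0 - ket 1 1) := rfl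
    rw [this, gf_smul, sc]; ring
  -- product kets
  have hket : ∀ i j : Fin 2, SepState (ketBra (ket i j) (ket i j)) := by
    intro i j
    have : ket i j = pv (Pi.single i 1) (Pi.single j 1) := by
      ext ⟨p, q⟩
      fin_cases i <;> fin_cases j <;> fin_cases p <;> fin_cases q <;> simp [ket, pv]
    rw [this]
    apply sep_pv <;> rw [unit_iff]
    · fin_cases i <;> simp
    · fin_cases j <;> simp
  have hk0 : ∀ i j, gf K (bell 0) (ket i j) ≤ 1 / 2 := fun i j =>
    sep_bound (hNE _ (hket i j)) _ _ (qf_kraus K _ _) pv_bound0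
  -- trace bound on Φ1
  have htr := gf_trace K hK (bell 0)
  have hn : ∑ p, Complex.normSq (bell 0 p) = 1 := by
    simp [bell, ket, Fintype.sum_prod_type]
    try norm_num
  rw [hn] at htr
  have n2 := gf_nonneg K (bell 2) (bell 0)
  have n3 := gf_nonneg K (bell 3) (bell 0)
  have n1 := gf_nonneg K (bell 1) (bell 0)
  have hpar := gf_par K (bell 0) (ket 0 0) (ket 1 1)
  have p00 := hk0 0 0
  have p11 := hk0 1 1
  have p01 := hk0 0 1
  have n01 := gf_nonneg K (bell 0) (ket 0 1)
  have n10 := gf_nonneg K (bell 0) (ket 1 0)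
  have hac : gf K (bell 0) (bell 0) + gf K (bell 0) (bell 1) ≤ 1 := by
    rw [hb0, hb1]; linarith
  have nc := gf_nonneg K (bell 0) (bell 1)
  -- step 1
  have hbd : gf K (bell 0) (ket 0 1) ≤ 2 * (1 - gf K (bell 0) (bell 0)) := by
    set b := gf K (bell 0) (ket 0 1) with hbdef
    have hpos : 0 < 1 - b := by linarith
    have hA : Real.sqrt (1 - b) ^ 2 = 1 - b := Real.sq_sqrt hpos.le
    have hA0 : Real.sqrt (1 - b) ≠ 0 := (Real.sqrt_pos.mpr hpos).ne'
    have := avg_bound K hNE (bell 0) pv_bound0 (Real.sqrt (1 - b)) (Real.sqrt (1 - b))⁻¹ 1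
      (by norm_num) (mul_inv_cancel₀ hA0)
    rw [inv_pow, hA, Complex.ofReal_one, one_smul] at this
    have e := hb0 (bell 0)
    have hm : 0 ≤ (1 - b) * gf K (bell 0) (ket 1 0) := by positivity
    have hi : (1 - b) * (1 - b)⁻¹ = 1 := mul_inv_cancel₀ hpos.ne'
    have hi1 : 1 ≤ (1 - b)⁻¹ := (one_le_inv₀ hpos).mpr (by linarith)
    rw [← hbdef] at this
    have hrb : (1 - b)⁻¹ * b = (1 - b)⁻¹ - 1 := by linear_combination -hi
    have hrb2 : 1 * b ≤ (1 - b)⁻¹ * b := mul_le_mul_of_nonneg_right hi1 n01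
    linarith
  have hl2 : 0 < l2 := by linarith
  have hδ : gf K (bell 0) (bell 0) = 1 := by
    by_contra hne
    have hlt : gf K (bell 0) (bell 0) < 1 := lt_of_le_of_ne (by linarith) hne
    have m1 := mul_le_mul_of_nonneg_left hbd hl2.le
    have m2 := mul_le_mul_of_nonneg_left hac h3.le
    have m3 : 0 < (l1 - 2 * l2 - l3) * (1 - gf K (bell 0) (bell 0)) :=
      mul_pos (by linarith) (by linarith)
    linarith
  have hb : gf K (bell 0) (ket 0 1) = 0 := by linarith
  -- step 2
  have z3 : gf K (bell 3) (ket 0 1) = 0 := by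
    have a1 := mul_nonneg (by linarith : 0 ≤ l1) (gf_nonneg K (bell 3) (bell 0))
    have a2 := mul_nonneg hl2.le (gf_nonneg K (bell 3) (ket 0 1))
    have a3 := mul_nonneg h3.le (gf_nonneg K (bell 3) (bell 1))
    have : l2 * gf K (bell 3) (ket 0 1) = 0 := by linarith
    rcases mul_eq_zero.mp this with h | h
    · linarith
    · exact h
  have half : gf K (bell 1) (ket 0 1) = 1 / 2 := by
    refine sep_half (hNE _ (hket 0 1)) _ (qf_kraus K _ _) ?_ ?_
    · rw [qf_kraus, hb]; simp
    · rw [qf_kraus, z3]; simp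
  -- step 3
  have hz : gf K (bell 1) (bell 0) = 0 := by linarith
  rw [hz, half] at E1
  -- step 4
  have hf : ∀ A : ℝ, 0 < A → 2 * gf K (bell 1) (bell 1) ≤ 1 + A ^ 2 / 2 := by
    intro A hA
    have := avg_bound K hNE (bell 1) pv_bound1 A A⁻¹ (-1) (by norm_num) (mul_inv_cancel₀ hA.ne')
    rw [half, Complex.ofReal_neg, Complex.ofReal_one, neg_one_smul, ← sub_eq_add_neg] at this
    have e := hb1 (bell 1)
    have n := mul_nonneg (sq_nonneg A) (gf_nonneg K (bell 1) (ket 1 0))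
    linarith
  have hgt : 1 / 2 < gf K (bell 1) (bell 1) := by
    by_contra hle
    have := mul_le_mul_of_nonneg_left (not_lt.mp hle) h3.le
    linarith
  have hp : 0 < 2 * gf K (bell 1) (bell 1) - 1 := by linarith
  have := hf _ (Real.sqrt_pos.mpr hp)
  rw [Real.sq_sqrt hp.le] at this
  linarith
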